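/- arXiv:2209.15130 — 2 statements merged into one kernel-verified Lean document; each statement's English description precedes it below -/
import Mathlib

section
/- Let Y₁, Y₂ ∈ ℝ^{p×r}_*. Then there exists Q* ∈ O(r) such that: (i) Y₁ᵀY₂Q* is symmetric positive semidefinite; (ii) Y₁ᵀ(Y₂Q* − Y₁) is symmetric (i.e. Y₂Q* − Y₁ is horizontal at Y₁); and (iii) ‖Y₂Q* − Y₁‖_F ≤ ‖Y₂Q − Y₁‖_F for every Q ∈ O(r), so that d(Y₁,Y₂) = ‖Y₂Q* − Y₁‖_F. Moreover, if Y₁ᵀY₂ is nonsingular, then Q* is the unique minimizer of Q ↦ ‖Y₂Q − Y₁‖_F over O(r). -/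
open Matrix

/-- Trace inner product `⟨A,B⟩ = tr(AᵀB)`. -/
noncomputable def trInner {m n : ℕ} (A B : Matrix (Fin m) (Fin n) ℝ) : ℝ :=
  ∑ i, ∑ j, A i j * B i j

/-- Frobenius norm. -/
noncomputable def frob {m n : ℕ} (A : Matrix (Fin m) (Fin n) ℝ) : ℝ :=
  Real.sqrt (∑ i, ∑ j, (A i j) ^ 2)

open scoped Classical in
/-- The `i`-th largest eigenvalue (1-indexed, `1 ≤ i ≤ n`) of a Hermitian matrix; junk value 0
otherwise. -/
noncomputable def eigVal {n : ℕ} (A : Matrix (Fin n) (Fin n) ℝ) (i : ℕ) : ℝ :=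
  if hA : A.IsHermitian then
    if h : n - i < n then hA.eigenvalues (Tuple.sort hA.eigenvalues ⟨n - i, h⟩) else 0
  else 0

/-- The `i`-th largest singular value (1-indexed) of `Y`, so `sval Y 1 = ‖Y‖` (spectral norm)
and `sval Y r` is the least singular value. -/
noncomputable def sval {p r : ℕ} (Y : Matrix (Fin p) (Fin r) ℝ) (i : ℕ) : ℝ :=
  Real.sqrt (eigVal (Yᵀ * Y) i)

/-- `Q` is an orthogonal matrix. -/
def IsOrtho {r : ℕ} (Q : Matrix (Fin r) (Fin r) ℝ) : Prop := Qᵀ * Q = 1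

/-- The quotient distance `d(Y₁,Y₂) = min_{Q ∈ O(r)} ‖Y₂Q − Y₁‖_F`. -/
noncomputable def dOrth {p r : ℕ} (Y₁ Y₂ : Matrix (Fin p) (Fin r) ℝ) : ℝ :=
  sInf {c | ∃ Q : Matrix (Fin r) (Fin r) ℝ, IsOrtho Q ∧ c = frob (Y₂ * Q - Y₁)}

/-!
By polar decomposition there is an orthogonal `U` with `Y₁ᴴ Y₂ U` positive semidefinite, say equal
to `Bᴴ B`. Expanding squares, `‖Y₂ V - Y₁‖² = ‖Y₂ U - Y₁‖² + ‖B Uᴴ V - B‖²` for every orthogonal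
`V`, so `U` is a minimizer, and `V` is another one only if `B Uᴴ V = B`, that is, only if
`Y₁ᴴ Y₂ V = Y₁ᴴ Y₂ U`. The argument works verbatim over `ℂ`, with unitary matrices.
-/

open scoped ComplexOrder

section LinearIsometry

variable {𝕜 E V : Type*} [RCLike 𝕜] [AddCommGroup E] [Module 𝕜 E]
  [NormedAddCommGroup V] [InnerProductSpace 𝕜 V] [FiniteDimensional 𝕜 V]

theorem exists_linearIsometry_apply_eq_of_norm_eq {S T : E →ₗ[𝕜] V} (h : ∀ x, ‖S x‖ = ‖T x‖) :
    ∃ L : V →ₗᵢ[𝕜] V, ∀ x, L (S x) = T x := by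
  obtain ⟨g, hg⟩ := S.rangeRestrict.exists_rightInverse_of_surjective S.range_rangeRestrict
  have hSg (y : S.range) : S (g y) = y := congr_arg Subtype.val (LinearMap.congr_fun hg y)
  let L₀ : S.range →ₗᵢ[𝕜] V := ⟨T ∘ₗ g, fun y => by
    rw [LinearMap.comp_apply, ← h, hSg, Submodule.norm_coe]⟩
  refine ⟨L₀.extend, fun x => (L₀.extend_apply (S.rangeRestrict x)).trans ?_⟩
  have hS : S (g (S.rangeRestrict x) - x) = 0 := by
    rw [map_sub, hSg, LinearMap.codRestrict_apply, sub_self]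
  have hT : T (g (S.rangeRestrict x) - x) = 0 := by
    rw [← norm_eq_zero, ← h, hS, norm_zero]
  rwa [map_sub, sub_eq_zero] at hT

end LinearIsometry

section PolarDecomposition

variable {𝕜 m n : Type*} [RCLike 𝕜] [Fintype m]

theorem norm_sq_toEuclideanLin_apply [Fintype n] [DecidableEq n] (A : Matrix m n 𝕜)
    (x : EuclideanSpace 𝕜 n) :
    ‖A.toEuclideanLin x‖ ^ 2 = RCLike.re (inner 𝕜 x ((Aᴴ * A).toEuclideanLin x)) := by
  classical
  rw [toLpLin_mul_same, LinearMap.comp_apply, toEuclideanLin_conjTranspose_eq_adjoint,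
    LinearMap.adjoint_inner_right, inner_self_eq_norm_sq]

theorem mem_unitaryGroup_of_norm_toEuclideanLin_apply [DecidableEq m] {U : Matrix m m 𝕜}
    (h : ∀ x, ‖U.toEuclideanLin x‖ = ‖x‖) : U ∈ unitaryGroup m 𝕜 := by
  let L : EuclideanSpace 𝕜 m →ₗᵢ[𝕜] EuclideanSpace 𝕜 m := ⟨U.toEuclideanLin, h⟩
  rw [mem_unitaryGroup_iff', star_eq_conjTranspose]
  apply toEuclideanLin.injective
  rw [toLpLin_mul_same, toEuclideanLin_conjTranspose_eq_adjoint, toLpLin_one]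
  exact L.adjoint_comp_self'

theorem exists_unitary_mul_eq_of_conjTranspose_mul_self_eq [DecidableEq m] [Finite n]
    {A B : Matrix m n 𝕜} (h : Aᴴ * A = Bᴴ * B) : ∃ U ∈ unitaryGroup m 𝕜, U * A = B := by
  classical
  cases nonempty_fintype n
  have hnorm (x : EuclideanSpace 𝕜 n) : ‖A.toEuclideanLin x‖ = ‖B.toEuclideanLin x‖ := by
    rw [← sq_eq_sq₀ (norm_nonneg _) (norm_nonneg _), norm_sq_toEuclideanLin_apply,
      norm_sq_toEuclideanLin_apply, h]
  obtain ⟨L, hL⟩ := exists_linearIsometry_apply_eq_of_norm_eq hnorm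
  obtain ⟨U, hU⟩ := toEuclideanLin.surjective L.toLinearMap
  refine ⟨U, mem_unitaryGroup_of_norm_toEuclideanLin_apply fun x => ?_, ?_⟩
  · rw [hU]
    exact L.norm_map x
  · apply toEuclideanLin.injective
    rw [toLpLin_mul_same, hU]
    exact LinearMap.ext hL

open scoped MatrixOrder in
theorem exists_unitary_mul_posSemidef [DecidableEq m] (A : Matrix m m 𝕜) :
    ∃ U ∈ unitaryGroup m 𝕜, (A * U).PosSemidef := by
  have hA : 0 ≤ A * Aᴴ := (posSemidef_self_mul_conjTranspose A).nonneg
  have hP : (CFC.sqrt (A * Aᴴ)).PosSemidef := (CFC.sqrt_nonneg (A * Aᴴ)).posSemidef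
  obtain ⟨U, hU, hUA⟩ : ∃ U ∈ unitaryGroup m 𝕜, U * Aᴴ = CFC.sqrt (A * Aᴴ) :=
    exists_unitary_mul_eq_of_conjTranspose_mul_self_eq <| by
      rw [conjTranspose_conjTranspose, hP.isHermitian.eq, CFC.sqrt_mul_sqrt_self _ hA]
  refine ⟨Uᴴ, Unitary.star_mem hU, ?_⟩
  rw [← conjTranspose_conjTranspose A, ← conjTranspose_mul, hUA]
  exact hP.conjTranspose

end PolarDecomposition

open scoped Matrix.Norms.Frobenius

section Alignment

variable {𝕜 k m n : Type*} [RCLike 𝕜] [Fintype k] [Fintype m] [Fintype n]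

theorem frobenius_norm_sq_eq_re_trace (A : Matrix m n 𝕜) :
    ‖A‖ ^ 2 = RCLike.re (Aᴴ * A).trace := by
  rw [frobenius_norm_def, ← Real.sqrt_eq_rpow, Real.sq_sqrt (by positivity), Finset.sum_comm]
  simp only [trace, diag_apply, mul_apply, conjTranspose_apply, RCLike.star_def, RCLike.conj_mul,
    map_sum, Real.rpow_two, ← RCLike.ofReal_pow, RCLike.ofReal_re]

theorem frobenius_norm_sub_sq (A B : Matrix m n 𝕜) :
    ‖A - B‖ ^ 2 = ‖A‖ ^ 2 + ‖B‖ ^ 2 - 2 * RCLike.re (Bᴴ * A).trace := by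
  have hcross : RCLike.re (Aᴴ * B).trace = RCLike.re (Bᴴ * A).trace := by
    rw [← conjTranspose_conjTranspose (Aᴴ * B), trace_conjTranspose, conjTranspose_mul,
      conjTranspose_conjTranspose, RCLike.star_def, RCLike.conj_re]
  simp only [frobenius_norm_sq_eq_re_trace, conjTranspose_sub, Matrix.sub_mul, Matrix.mul_sub,
    trace_sub, map_sub, hcross]
  ring

variable [DecidableEq n]

theorem frobenius_norm_mul_unitary (A : Matrix m n 𝕜) {U : Matrix n n 𝕜}
    (hU : U ∈ unitaryGroup n 𝕜) : ‖A * U‖ = ‖A‖ := by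
  have hUU : U * Uᴴ = 1 := mem_unitaryGroup_iff.mp hU
  rw [← sq_eq_sq₀ (norm_nonneg _) (norm_nonneg _), frobenius_norm_sq_eq_re_trace,
    frobenius_norm_sq_eq_re_trace, trace_mul_comm, conjTranspose_mul, Matrix.mul_assoc,
    ← Matrix.mul_assoc U, hUU, Matrix.one_mul, trace_mul_comm]

theorem frobenius_norm_mul_unitary_sub_sq {Y₁ Y₂ : Matrix m n 𝕜} {B : Matrix k n 𝕜}
    (hB : Y₁ᴴ * Y₂ = Bᴴ * B) {W : Matrix n n 𝕜} (hW : W ∈ unitaryGroup n 𝕜) :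
    ‖Y₂ * W - Y₁‖ ^ 2 = ‖Y₂ - Y₁‖ ^ 2 + ‖B * W - B‖ ^ 2 := by
  have hBB : ‖B‖ ^ 2 = RCLike.re (Y₁ᴴ * Y₂).trace := by rw [hB, frobenius_norm_sq_eq_re_trace]
  simp only [frobenius_norm_sub_sq, frobenius_norm_mul_unitary _ hW, ← Matrix.mul_assoc, ← hB, hBB]
  ring

open scoped MatrixOrder in
theorem exists_frobenius_norm_sub_sq_eq_add {Y₁ Y₂ : Matrix m n 𝕜} {U : Matrix n n 𝕜}
    (hU : U ∈ unitaryGroup n 𝕜) (hP : (Y₁ᴴ * Y₂ * U).PosSemidef) :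
    ∃ B : Matrix n n 𝕜, Y₁ᴴ * Y₂ * U = Bᴴ * B ∧ ∀ V ∈ unitaryGroup n 𝕜,
      ‖Y₂ * V - Y₁‖ ^ 2 = ‖Y₂ * U - Y₁‖ ^ 2 + ‖B * (Uᴴ * V) - B‖ ^ 2 := by
  obtain ⟨B, hB⟩ := CStarAlgebra.nonneg_iff_eq_star_mul_self.mp hP.nonneg
  refine ⟨B, hB, fun V hV => ?_⟩
  have hUV : Y₂ * V = Y₂ * U * (Uᴴ * V) := by
    rw [Matrix.mul_assoc, ← Matrix.mul_assoc U, ← star_eq_conjTranspose,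
      mem_unitaryGroup_iff.mp hU, Matrix.one_mul]
  rw [hUV]
  exact frobenius_norm_mul_unitary_sub_sq ((Matrix.mul_assoc _ _ _).symm.trans hB)
    (mul_mem (Unitary.star_mem hU) hV)

theorem isMinOn_frobenius_norm_of_posSemidef {Y₁ Y₂ : Matrix m n 𝕜} {U : Matrix n n 𝕜}
    (hU : U ∈ unitaryGroup n 𝕜) (hP : (Y₁ᴴ * Y₂ * U).PosSemidef) :
    IsMinOn (fun V => ‖Y₂ * V - Y₁‖) (unitaryGroup n 𝕜) U := by
  obtain ⟨B, -, hB⟩ := exists_frobenius_norm_sub_sq_eq_add hU hP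
  intro V hV
  refine le_of_sq_le_sq ?_ (norm_nonneg _)
  rw [hB V hV]
  exact le_add_of_nonneg_right (sq_nonneg _)

theorem mul_eq_mul_of_isMinOn_frobenius_norm {Y₁ Y₂ : Matrix m n 𝕜} {U V : Matrix n n 𝕜}
    (hU : U ∈ unitaryGroup n 𝕜) (hP : (Y₁ᴴ * Y₂ * U).PosSemidef) (hV : V ∈ unitaryGroup n 𝕜)
    (hmin : IsMinOn (fun W => ‖Y₂ * W - Y₁‖) (unitaryGroup n 𝕜) V) :
    Y₁ᴴ * Y₂ * V = Y₁ᴴ * Y₂ * U := by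
  obtain ⟨B, hB, hpyth⟩ := exists_frobenius_norm_sub_sq_eq_add hU hP
  have hle : ‖Y₂ * V - Y₁‖ ^ 2 ≤ ‖Y₂ * U - Y₁‖ ^ 2 :=
    pow_le_pow_left₀ (norm_nonneg _) (hmin hU) 2
  have hBV : B * (Uᴴ * V) = B := by
    rw [← sub_eq_zero, ← norm_eq_zero, ← sq_eq_zero_iff]
    exact le_antisymm (by linarith [hpyth V hV]) (sq_nonneg _)
  calc Y₁ᴴ * Y₂ * V = Y₁ᴴ * Y₂ * (U * Uᴴ) * V := by
        rw [← star_eq_conjTranspose U, mem_unitaryGroup_iff.mp hU, Matrix.mul_one]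
    _ = Y₁ᴴ * Y₂ * U * (Uᴴ * V) := by simp only [Matrix.mul_assoc]
    _ = Y₁ᴴ * Y₂ * U := by rw [hB, Matrix.mul_assoc, hBV]

theorem stmt1_general (Y₁ Y₂ : Matrix m n 𝕜) :
    ∃ U ∈ unitaryGroup n 𝕜,
      (Y₁ᴴ * Y₂ * U).PosSemidef ∧
      (Y₁ᴴ * (Y₂ * U - Y₁)).IsHermitian ∧
      IsMinOn (fun V => ‖Y₂ * V - Y₁‖) (unitaryGroup n 𝕜) U ∧
      ⨅ V : unitaryGroup n 𝕜, ‖Y₂ * V.1 - Y₁‖ = ‖Y₂ * U - Y₁‖ ∧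
      ((Y₁ᴴ * Y₂).det ≠ 0 → ∀ V ∈ unitaryGroup n 𝕜,
        IsMinOn (fun W => ‖Y₂ * W - Y₁‖) (unitaryGroup n 𝕜) V → V = U) := by
  obtain ⟨U, hU, hP⟩ := exists_unitary_mul_posSemidef (Y₁ᴴ * Y₂)
  have hmin := isMinOn_frobenius_norm_of_posSemidef hU hP
  refine ⟨U, hU, hP, ?_, hmin, hmin.iInf_eq hU, fun hdet V hV hVmin => ?_⟩
  · rw [Matrix.mul_sub, ← Matrix.mul_assoc]
    exact hP.isHermitian.sub (isHermitian_conjTranspose_mul_self Y₁)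
  · have hunit : IsUnit (Y₁ᴴ * Y₂) := (isUnit_iff_isUnit_det _).mpr hdet.isUnit
    exact hunit.mul_left_cancel (mul_eq_mul_of_isMinOn_frobenius_norm hU hP hV hVmin)

end Alignment

section Real

variable {p r : ℕ}

theorem isOrtho_iff_mem_unitaryGroup {Q : Matrix (Fin r) (Fin r) ℝ} :
    IsOrtho Q ↔ Q ∈ unitaryGroup (Fin r) ℝ := by
  rw [IsOrtho, mem_unitaryGroup_iff', star_eq_conjTranspose, conjTranspose_eq_transpose_of_trivial]

theorem frob_eq_norm (A : Matrix (Fin p) (Fin r) ℝ) : frob A = ‖A‖ := by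
  simp only [frob, frobenius_norm_def, Real.sqrt_eq_rpow, Real.norm_eq_abs, Real.rpow_two, sq_abs]

theorem dOrth_eq_iInf (Y₁ Y₂ : Matrix (Fin p) (Fin r) ℝ) :
    dOrth Y₁ Y₂ = ⨅ Q : unitaryGroup (Fin r) ℝ, ‖Y₂ * Q.1 - Y₁‖ := by
  refine congr_arg sInf (Set.ext fun c => ?_)
  simp only [Set.mem_ofPred_eq, Set.mem_range, Subtype.exists, exists_prop, frob_eq_norm,
    isOrtho_iff_mem_unitaryGroup, @eq_comm ℝ c]

end Real

/-- optimal orthogonal alignment: existence of a best aligning orthogonal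
matrix `Qstar` with `Y₁ᵀ*Y₂*Qstar` PSD and `Y₂*Qstar - Y₁` horizontal at `Y₁`, attaining the
quotient distance; uniqueness of the minimizer when `Y₁ᵀ*Y₂` is nonsingular. -/
theorem stmt1 {p r : ℕ} (Y₁ Y₂ : Matrix (Fin p) (Fin r) ℝ)
    (hY₁ : Y₁.rank = r) (hY₂ : Y₂.rank = r) :
    ∃ Qstar : Matrix (Fin r) (Fin r) ℝ, IsOrtho Qstar ∧
      (Y₁ᵀ * Y₂ * Qstar).PosSemidef ∧
      (Y₁ᵀ * (Y₂ * Qstar - Y₁)).IsSymm ∧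
      (∀ Q : Matrix (Fin r) (Fin r) ℝ, IsOrtho Q →
        frob (Y₂ * Qstar - Y₁) ≤ frob (Y₂ * Q - Y₁)) ∧
      dOrth Y₁ Y₂ = frob (Y₂ * Qstar - Y₁) ∧
      ((Y₁ᵀ * Y₂).det ≠ 0 →
        ∀ Q : Matrix (Fin r) (Fin r) ℝ, IsOrtho Q →
          (∀ O : Matrix (Fin r) (Fin r) ℝ, IsOrtho O →
            frob (Y₂ * Q - Y₁) ≤ frob (Y₂ * O - Y₁)) → Q = Qstar) := by
  simpa only [isOrtho_iff_mem_unitaryGroup, frob_eq_norm, dOrth_eq_iInf, isMinOn_iff,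
    SetLike.mem_coe, conjTranspose_eq_transpose_of_trivial, isHermitian_iff_isSymm]
    using stmt1_general Y₁ Y₂
end

section
/- Let Y, Y' ∈ ℝ^{p×r}_* with d(Y',Y) < σ_r(Y), and let O' ∈ O(r) be a minimizer of O ↦ ‖Y'O − Y‖_F over O ∈ O(r). Then for every t ∈ [0,1], the r×r matrix Yᵀ(Y + t(Y'O' − Y)) is nonsingular and det(Yᵀ(Y + t(Y'O' − Y))) > 0. -/
open Matrix

/-!
If `0 < xᵀAx` for all `x ≠ 0`, then `det A > 0`: the determinant cannot vanish along the segment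
from `1` to `A`. For `A = Yᵀ(Y + tE)`, with `u = Yx` and `v = tEx`, one has
`2 xᵀAx = ‖u + v‖² + (‖u‖² - ‖v‖²)`, which is positive as soon as `‖E‖_F < σ_r(Y)` and `|t| ≤ 1`.
Since `d` is symmetric, the error `E = Y'O' - Y` at a minimizer satisfies
`‖E‖_F = d(Y, Y') = d(Y', Y) < σ_r(Y)`.
-/

section Determinant

variable {m n : Type*} [Fintype m] [Fintype n] [DecidableEq n]

lemma det_ne_zero_of_dotProduct_mulVec_pos {R : Type*} [CommRing R] [IsDomain R] [Preorder R]
    {A : Matrix n n R} (hA : ∀ x ≠ 0, 0 < x ⬝ᵥ (A *ᵥ x)) : A.det ≠ 0 := by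
  intro hdet
  obtain ⟨x, hx, hAx⟩ := Matrix.exists_mulVec_eq_zero_iff.mpr hdet
  simpa only [hAx, dotProduct_zero, lt_irrefl] using hA x hx

lemma det_pos_of_dotProduct_mulVec_pos {A : Matrix n n ℝ}
    (hA : ∀ x ≠ 0, 0 < x ⬝ᵥ (A *ᵥ x)) : 0 < A.det := by
  let B : ℝ → Matrix n n ℝ := fun s => AffineMap.lineMap 1 A s
  have hB_ne : ∀ s ∈ Set.Icc (0 : ℝ) 1, (B s).det ≠ 0 := by
    rintro s ⟨hs₀, hs₁⟩
    refine det_ne_zero_of_dotProduct_mulVec_pos fun x hx => ?_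
    have hxx : 0 < x ⬝ᵥ x := by simpa using dotProduct_star_self_pos_iff.mpr hx
    have hBx : x ⬝ᵥ (B s *ᵥ x) = (1 - s) * (x ⬝ᵥ x) + s * (x ⬝ᵥ (A *ᵥ x)) := by
      simp only [B, AffineMap.lineMap_apply_module, add_mulVec, smul_mulVec, one_mulVec,
        dotProduct_add, dotProduct_smul, smul_eq_mul]
    rw [hBx]
    rcases hs₀.eq_or_lt with rfl | hs_pos
    · simpa using hxx
    · exact add_pos_of_nonneg_of_pos (mul_nonneg (sub_nonneg.mpr hs₁) hxx.le)
        (mul_pos hs_pos (hA x hx))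
  have hB_cont : Continuous fun s => (B s).det := by
    simp only [B, AffineMap.lineMap_apply_module]
    fun_prop
  by_contra! hdet
  obtain ⟨s, hs, hs_zero⟩ := intermediate_value_Icc' zero_le_one hB_cont.continuousOn
    (show (0 : ℝ) ∈ Set.Icc (B 1).det (B 0).det by simpa [B] using hdet)
  exact hB_ne s hs hs_zero

lemma det_transpose_mul_add_pos {Y E : Matrix m n ℝ}
    (hE : ∀ x ≠ 0, (E *ᵥ x) ⬝ᵥ (E *ᵥ x) < (Y *ᵥ x) ⬝ᵥ (Y *ᵥ x)) :
    0 < (Yᵀ * (Y + E)).det := by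
  refine det_pos_of_dotProduct_mulVec_pos fun x hx => ?_
  have hlt := hE x hx
  have hform : x ⬝ᵥ ((Yᵀ * (Y + E)) *ᵥ x) = (Y *ᵥ x) ⬝ᵥ (Y *ᵥ x + E *ᵥ x) := by
    rw [← mulVec_mulVec, dotProduct_mulVec, vecMul_transpose, add_mulVec]
  rw [hform]
  set u := Y *ᵥ x
  set v := E *ᵥ x
  have hpolar : 2 * (u ⬝ᵥ (u + v)) = (u + v) ⬝ᵥ (u + v) + (u ⬝ᵥ u - v ⬝ᵥ v) := by
    simp only [dotProduct_add, add_dotProduct, dotProduct_comm v u]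
    ring
  have hnonneg : 0 ≤ (u + v) ⬝ᵥ (u + v) := by simpa using dotProduct_star_self_nonneg (u + v)
  linarith

end Determinant

section SingularValues

variable {n p r : ℕ}

lemma eigVal_self_le_eigenvalues {A : Matrix (Fin n) (Fin n) ℝ} (hA : A.IsHermitian) (i : Fin n) :
    eigVal A n ≤ hA.eigenvalues i := by
  have hn : n - n < n := by have := i.pos; omega
  rw [eigVal, dif_pos hA, dif_pos hn]
  simpa using Tuple.monotone_sort hA.eigenvalues
    (show ⟨n - n, hn⟩ ≤ (Tuple.sort hA.eigenvalues).symm i by simp [Fin.le_def])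

lemma eigVal_nonneg {A : Matrix (Fin n) (Fin n) ℝ} (hA : A.PosSemidef) (i : ℕ) :
    0 ≤ eigVal A i := by
  unfold eigVal
  split_ifs
  · exact hA.eigenvalues_nonneg _
  all_goals exact le_rfl

open scoped MatrixOrder in
lemma eigVal_self_mul_dotProduct_le {A : Matrix (Fin n) (Fin n) ℝ} (hA : A.IsHermitian)
    (x : Fin n → ℝ) : eigVal A n * (x ⬝ᵥ x) ≤ x ⬝ᵥ (A *ᵥ x) := by
  have hle : algebraMap ℝ _ (eigVal A n) ≤ A := by
    rw [algebraMap_le_iff_le_spectrum hA, hA.spectrum_real_eq_range_eigenvalues]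
    rintro _ ⟨i, rfl⟩
    exact eigVal_self_le_eigenvalues hA i
  have hform := (Matrix.le_iff.mp hle).dotProduct_mulVec_nonneg x
  simpa [Algebra.algebraMap_eq_smul_one, sub_mulVec, smul_mulVec, dotProduct_sub] using hform

lemma sval_sq_mul_dotProduct_le (Y : Matrix (Fin p) (Fin r) ℝ) (x : Fin r → ℝ) :
    sval Y r ^ 2 * (x ⬝ᵥ x) ≤ (Y *ᵥ x) ⬝ᵥ (Y *ᵥ x) := by
  have hGram : (Yᵀ * Y).PosSemidef := by simpa using posSemidef_conjTranspose_mul_self Y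
  calc sval Y r ^ 2 * (x ⬝ᵥ x)
      = eigVal (Yᵀ * Y) r * (x ⬝ᵥ x) := by rw [sval, Real.sq_sqrt (eigVal_nonneg hGram r)]
    _ ≤ x ⬝ᵥ ((Yᵀ * Y) *ᵥ x) := eigVal_self_mul_dotProduct_le hGram.isHermitian x
    _ = (Y *ᵥ x) ⬝ᵥ (Y *ᵥ x) := by rw [← mulVec_mulVec, dotProduct_mulVec, vecMul_transpose]

end SingularValues

section Frobenius

variable {m n : ℕ}

lemma frob_nonneg (A : Matrix (Fin m) (Fin n) ℝ) : 0 ≤ frob A :=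
  Real.sqrt_nonneg _

lemma frob_eq_sqrt_trace (A : Matrix (Fin m) (Fin n) ℝ) : frob A = √(A * Aᵀ).trace := by
  simp [frob, trace, mul_apply, pow_two]

lemma frob_neg (A : Matrix (Fin m) (Fin n) ℝ) : frob (-A) = frob A := by
  simp [frob]

lemma mulVec_dotProduct_mulVec_le_frob_sq_mul (A : Matrix (Fin m) (Fin n) ℝ) (x : Fin n → ℝ) :
    (A *ᵥ x) ⬝ᵥ (A *ᵥ x) ≤ frob A ^ 2 * (x ⬝ᵥ x) := by
  rw [frob, Real.sq_sqrt (by positivity), Finset.sum_mul]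
  refine Finset.sum_le_sum fun i _ => ?_
  simpa only [mulVec, dotProduct, pow_two] using
    Finset.sum_mul_sq_le_sq_mul_sq Finset.univ (A i) x

end Frobenius

section Orthogonal

variable {p r : ℕ}

lemma isOrtho_one : IsOrtho (1 : Matrix (Fin r) (Fin r) ℝ) := by
  simp [IsOrtho]

lemma IsOrtho.mul_transpose {Q : Matrix (Fin r) (Fin r) ℝ} (hQ : IsOrtho Q) : Q * Qᵀ = 1 :=
  mul_eq_one_comm.mp hQ

lemma IsOrtho.transpose {Q : Matrix (Fin r) (Fin r) ℝ} (hQ : IsOrtho Q) : IsOrtho Qᵀ := by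
  rw [IsOrtho, transpose_transpose, hQ.mul_transpose]

lemma IsOrtho.frob_mul {Q : Matrix (Fin r) (Fin r) ℝ} (hQ : IsOrtho Q)
    (A : Matrix (Fin p) (Fin r) ℝ) : frob (A * Q) = frob A := by
  rw [frob_eq_sqrt_trace, frob_eq_sqrt_trace, transpose_mul, Matrix.mul_assoc,
    ← Matrix.mul_assoc Q, hQ.mul_transpose, Matrix.one_mul]

lemma IsOrtho.frob_mul_transpose_sub {Q : Matrix (Fin r) (Fin r) ℝ} (hQ : IsOrtho Q)
    (Y₁ Y₂ : Matrix (Fin p) (Fin r) ℝ) : frob (Y₁ * Qᵀ - Y₂) = frob (Y₂ * Q - Y₁) := by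
  have hfactor : Y₁ * Qᵀ - Y₂ = -(Y₂ * Q - Y₁) * Qᵀ := by
    rw [neg_sub, Matrix.sub_mul, Matrix.mul_assoc, hQ.mul_transpose, Matrix.mul_one]
  rw [hfactor, hQ.transpose.frob_mul, frob_neg]

lemma le_dOrth {Y₁ Y₂ : Matrix (Fin p) (Fin r) ℝ} {c : ℝ}
    (hc : ∀ Q : Matrix (Fin r) (Fin r) ℝ, IsOrtho Q → c ≤ frob (Y₂ * Q - Y₁)) :
    c ≤ dOrth Y₁ Y₂ := by
  refine le_csInf ⟨_, 1, isOrtho_one, rfl⟩ ?_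
  rintro _ ⟨Q, hQ, rfl⟩
  exact hc Q hQ

lemma dOrth_le_frob {Q : Matrix (Fin r) (Fin r) ℝ} (hQ : IsOrtho Q)
    (Y₁ Y₂ : Matrix (Fin p) (Fin r) ℝ) : dOrth Y₁ Y₂ ≤ frob (Y₂ * Q - Y₁) := by
  refine csInf_le ⟨0, ?_⟩ ⟨Q, hQ, rfl⟩
  rintro _ ⟨_, _, rfl⟩
  exact frob_nonneg _

lemma dOrth_comm (Y₁ Y₂ : Matrix (Fin p) (Fin r) ℝ) : dOrth Y₁ Y₂ = dOrth Y₂ Y₁ := by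
  have hle (Z₁ Z₂ : Matrix (Fin p) (Fin r) ℝ) : dOrth Z₁ Z₂ ≤ dOrth Z₂ Z₁ :=
    le_dOrth fun _ hQ =>
      (dOrth_le_frob hQ.transpose Z₁ Z₂).trans_eq (hQ.frob_mul_transpose_sub Z₂ Z₁)
  exact le_antisymm (hle Y₁ Y₂) (hle Y₂ Y₁)

end Orthogonal

theorem stmt2_general {p r : ℕ} {Y E : Matrix (Fin p) (Fin r) ℝ} (hE : frob E < sval Y r)
    {t : ℝ} (ht : |t| ≤ 1) : 0 < (Yᵀ * (Y + t • E)).det := by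
  refine det_transpose_mul_add_pos fun x hx => ?_
  have hxx : 0 < x ⬝ᵥ x := by simpa using dotProduct_star_self_pos_iff.mpr hx
  have hEx : 0 ≤ (E *ᵥ x) ⬝ᵥ (E *ᵥ x) := by simpa using dotProduct_star_self_nonneg (E *ᵥ x)
  calc ((t • E) *ᵥ x) ⬝ᵥ ((t • E) *ᵥ x)
      = t ^ 2 * ((E *ᵥ x) ⬝ᵥ (E *ᵥ x)) := by
        simp only [smul_mulVec, smul_dotProduct, dotProduct_smul, smul_eq_mul]
        ring
    _ ≤ (E *ᵥ x) ⬝ᵥ (E *ᵥ x) := mul_le_of_le_one_left hEx ((sq_le_one_iff_abs_le_one t).mpr ht)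
    _ ≤ frob E ^ 2 * (x ⬝ᵥ x) := mulVec_dotProduct_mulVec_le_frob_sq_mul E x
    _ < sval Y r ^ 2 * (x ⬝ᵥ x) :=
        mul_lt_mul_of_pos_right (pow_lt_pow_left₀ hE (frob_nonneg E) two_ne_zero) hxx
    _ ≤ (Y *ᵥ x) ⬝ᵥ (Y *ᵥ x) := sval_sq_mul_dotProduct_le Y x

/-- for aligned matrices at quotient distance less than `σ_r(Y)`, the matrix
`Yᵀ(Y + t(YO - Y))` is nonsingular with positive determinant for all `t` in `[0,1]`. -/
theorem stmt2 {p r : ℕ} (Y Y' : Matrix (Fin p) (Fin r) ℝ)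
    (hY : Y.rank = r) (hY' : Y'.rank = r)
    (hd : dOrth Y' Y < sval Y r)
    (O' : Matrix (Fin r) (Fin r) ℝ) (hO' : IsOrtho O')
    (hmin : ∀ O : Matrix (Fin r) (Fin r) ℝ, IsOrtho O →
      frob (Y' * O' - Y) ≤ frob (Y' * O - Y)) :
    ∀ t : ℝ, t ∈ Set.Icc (0 : ℝ) 1 →
      (Yᵀ * (Y + t • (Y' * O' - Y))).det ≠ 0 ∧
      0 < (Yᵀ * (Y + t • (Y' * O' - Y))).det := by
  intro t ht
  have hE : frob (Y' * O' - Y) < sval Y r :=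
    (le_dOrth hmin).trans_lt (dOrth_comm Y' Y ▸ hd)
  have hdet := stmt2_general hE (abs_le.mpr ⟨by linarith [ht.1], ht.2⟩)
  exact ⟨hdet.ne', hdet⟩
end
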